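/- Let 𝓓 = (Ω, 𝓑) be a β(i) design with parameter (v, k, d), set c = k−d, and assume k−d ≥ i+1 and that v does not achieve the lower bound (d+2i)·(k−d)/i, i.e. i·v > (d+2i)·(k−d). Then h(v−k, d, c, i) ≥ 0. Moreover, h(v−k, d, c, i) = 0 holds if and only if the number |{B ∈ 𝓑 : |X ∩ B| = d+i+1}| is the same for every X ∈ S₂. -/

import Mathlib

open Finset

variable {α : Type*} [Fintype α] [DecidableEq α]

/-- `𝓑` is a design on the finite type `α` of cardinality `v`, with block size `k` and
maximal pairwise block intersection size `d`. -/
def IsDesign (𝓑 : Finset (Finset α)) (v k d : ℕ) : Prop :=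
  Fintype.card α = v ∧ 2 ≤ 𝓑.card ∧ d < k ∧ k < v ∧
  (∀ B ∈ 𝓑, B.card = k) ∧
  (∀ B ∈ 𝓑, ∀ C ∈ 𝓑, B ≠ C → (B ∩ C).card ≤ d) ∧
  (∃ B ∈ 𝓑, ∃ C ∈ 𝓑, B ≠ C ∧ (B ∩ C).card = d)

/-- `𝓑` is a `β(i)` design with parameters `(v, k, d)`: a design such that
`1 ≤ i ≤ (v - d + 1)/2` and every `(d + 2i - 1)`-element subset `X` of `Ω` admits a
unique block `B` with `|X ∩ B| ≥ d + i`. -/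
def IsBetaDesign (𝓑 : Finset (Finset α)) (v k d i : ℕ) : Prop :=
  IsDesign 𝓑 v k d ∧ 1 ≤ i ∧ 2 * i ≤ v - d + 1 ∧
  ∀ X : Finset α, X.card = d + 2 * i - 1 →
    ∃! B, B ∈ 𝓑 ∧ d + i ≤ (X ∩ B).card

/-- The family `S₂` of all `(d + 2(i+1))`-element subsets `X` of `Ω` such that
`|X ∩ B| ≤ d + i + 1` for every block `B ∈ 𝓑`. -/
def S2 (𝓑 : Finset (Finset α)) (d i : ℕ) : Finset (Finset α) :=
  (Finset.univ : Finset (Finset α)).filter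
    (fun X => X.card = d + 2 * (i + 1) ∧ ∀ B ∈ 𝓑, (X ∩ B).card ≤ d + i + 1)

/-- The polynomial `h(x, d, c, i)` of Proposition 7. -/
noncomputable def hPoly (x d c i : ℝ) : ℝ :=
  i * (i + 1) * x ^ 2 - i * (2 * (c - i) * d + 2 * i * c + 3 * i + 1) * x
    + (c - i) * (c - i - 1) * d ^ 2
    + (c - i) * ((2 * i + 1) * c - 3 * i - 1) * d
    + i * (i + 1) * c ^ 2 - i * (3 * i + 1) * c + 2 * i ^ 2 * (2 * i + 1)

section helpers

/-- Real version of the absorption identity. -/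
lemma aux_choose_succ (n a : ℕ) :
    ((a : ℝ) + 1) * (n.choose (a + 1) : ℝ) = ((n : ℝ) - a) * (n.choose a : ℝ) := by
  have h := Nat.choose_succ_right_eq n a
  rcases le_or_gt a n with h1 | h1
  · have h2 : ((n.choose (a + 1) * (a + 1) : ℕ) : ℝ) = ((n.choose a * (n - a) : ℕ) : ℝ) := by
      rw [h]
    push_cast [Nat.cast_sub h1] at h2
    linarith
  · rw [Nat.choose_eq_zero_of_lt h1, Nat.choose_eq_zero_of_lt (by omega)]
    simp

/-- Number of `n`-sets with fewer than `r` points outside a `k`-set (with `x` points outside). -/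
def auxP (k x r n : ℕ) : ℕ := ∑ l ∈ range r, k.choose (n - l) * x.choose l

lemma auxP_rec (k x n : ℕ) (r : ℕ) (hr : r ≤ n + 1) :
    ((k : ℝ) + x - n) * (auxP k x r n : ℝ) =
      ((n : ℝ) + 1) * (auxP k x r (n + 1) : ℝ)
        + r * ((k.choose (n + 1 - r) : ℝ) * (x.choose r : ℝ)) := by
  induction r with
  | zero => simp [auxP]
  | succ r ih =>
    have ih := ih (by omega)
    obtain ⟨a, rfl⟩ : ∃ a, n = r + a := ⟨n - r, by omega⟩
    have e1 : auxP k x (r + 1) (r + a) = auxP k x r (r + a) + k.choose a * x.choose r := by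
      simp [auxP, sum_range_succ]
    have e2 : auxP k x (r + 1) (r + a + 1)
        = auxP k x r (r + a + 1) + k.choose (a + 1) * x.choose r := by
      simp only [auxP, sum_range_succ]
      congr 3
      omega
    have e3 : r + a + 1 - r = a + 1 := by omega
    have e4 : r + a + 1 - (r + 1) = a := by omega
    rw [e3] at ih
    rw [e1, e2, e4]
    have h1 := aux_choose_succ k a
    have h2 := aux_choose_succ x r
    push_cast at ih ⊢
    linear_combination ih - (x.choose r : ℝ) * h1 - (k.choose a : ℝ) * h2

lemma aux_count2 (B : Finset α) (p q : ℕ) :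
    ((univ : Finset (Finset α)).filter
      (fun X => (X ∩ B).card = p ∧ (X \ B).card = q)).card
      = B.card.choose p * (Fintype.card α - B.card).choose q := by
  rw [← card_compl, ← card_powersetCard, ← card_powersetCard q, ← card_product]
  refine card_bij' (fun X _ => (X ∩ B, X \ B)) (fun Y _ => Y.1 ∪ Y.2) ?_ ?_ ?_ ?_
  · intro X hX
    simp only [mem_filter, mem_univ, true_and] at hX
    simp only [mem_product, mem_powersetCard]
    refine ⟨⟨inter_subset_right, hX.1⟩, ?_, hX.2⟩
    intro a ha
    simp at ha ⊢
    exact ha.2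
  · rintro ⟨Y, Z⟩ h
    simp only [mem_product, mem_powersetCard] at h
    obtain ⟨⟨h1, h2⟩, h3, h4⟩ := h
    have hZ : ∀ a ∈ Z, a ∉ B := fun a ha => by simpa using h3 ha
    have e1 : (Y ∪ Z) ∩ B = Y := by
      ext a; have := @h1 a; have := hZ a; simp; tauto
    have e2 : (Y ∪ Z) \ B = Z := by
      ext a; have := @h1 a; have := hZ a; simp; tauto
    simp [e1, e2, h2, h4]
  · intro X hX
    simp only
    ext a; simp; tauto
  · rintro ⟨Y, Z⟩ h
    simp only [mem_product, mem_powersetCard] at h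
    obtain ⟨⟨h1, h2⟩, h3, h4⟩ := h
    have hZ : ∀ a ∈ Z, a ∉ B := fun a ha => by simpa using h3 ha
    have e1 : (Y ∪ Z) ∩ B = Y := by
      ext a; have := @h1 a; have := hZ a; simp; tauto
    have e2 : (Y ∪ Z) \ B = Z := by
      ext a; have := @h1 a; have := hZ a; simp; tauto
    simp [e1, e2]

lemma aux_count (B : Finset α) (n p q : ℕ) (h : p + q = n) :
    ((powersetCard n (univ : Finset α)).filter (fun X => (X ∩ B).card = p)).card
      = B.card.choose p * (Fintype.card α - B.card).choose q := by
  rw [← aux_count2]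
  congr 1
  ext X
  have := card_inter_add_card_sdiff X B
  simp [mem_powersetCard]
  omega

lemma aux_countlt (B : Finset α) (n r : ℕ) (h : r ≤ n + 1) :
    ((powersetCard n (univ : Finset α)).filter (fun X => (X \ B).card < r)).card
      = auxP B.card (Fintype.card α - B.card) r n := by
  rw [card_eq_sum_card_fiberwise (t := range r) (f := fun X => (X \ B).card)]
  · unfold auxP
    refine sum_congr rfl fun l hl => ?_
    rw [mem_range] at hl
    rw [← aux_count B n (n - l) l (by omega)]
    congr 1
    ext X
    have := card_inter_add_card_sdiff X B
    simp [mem_powersetCard]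
    omega
  · intro X hX
    simp at hX ⊢
    exact hX.2

/-- Intersection bound used everywhere. -/
lemma aux_inter (X B C : Finset α) :
    (X ∩ B).card + (X ∩ C).card ≤ X.card + (B ∩ C).card := by
  have h := card_union_add_card_inter (X ∩ B) (X ∩ C)
  have h1 : (X ∩ B ∪ X ∩ C).card ≤ X.card :=
    card_le_card (by intro a; simp; tauto)
  have h2 : ((X ∩ B) ∩ (X ∩ C)).card ≤ (B ∩ C).card :=
    card_le_card (by intro a; simp; tauto)
  omega

lemma aux_struct (X B C : Finset α) (d r : ℕ) (hX : X.card = d + 2 * r)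
    (hBC : (B ∩ C).card = d) (h1 : (X ∩ B).card = d + r) (h2 : (X ∩ C).card = d + r) :
    B ∩ C ⊆ X ∧ X ⊆ B ∪ C ∧ (X ∩ (B \ C)).card = r ∧ (X ∩ (C \ B)).card = r := by
  have h := card_union_add_card_inter (X ∩ B) (X ∩ C)
  have s1 : X ∩ B ∪ X ∩ C ⊆ X := by intro a; simp; tauto
  have s2 : (X ∩ B) ∩ (X ∩ C) ⊆ B ∩ C := by intro a; simp; tauto
  have l1 := card_le_card s1
  have l2 := card_le_card s2
  have e1 := eq_of_subset_of_card_le s1 (by omega)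
  have e2 := eq_of_subset_of_card_le s2 (by omega)
  have i1 : B ∩ C ⊆ X := by
    intro a ha
    rw [← e2] at ha
    simp at ha
    tauto
  refine ⟨i1, ?_, ?_, ?_⟩
  · intro a ha
    rw [← e1] at ha
    simp at ha ⊢
    tauto
  · have e3 : (X ∩ B) \ (B ∩ C) = X ∩ (B \ C) := by ext a; simp; tauto
    have := card_sdiff_of_subset (s := B ∩ C) (t := X ∩ B)
      (subset_inter i1 inter_subset_left)
    rw [e3] at this
    omega
  · have e3 : (X ∩ C) \ (B ∩ C) = X ∩ (C \ B) := by ext a; simp; tauto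
    have := card_sdiff_of_subset (s := B ∩ C) (t := X ∩ C)
      (subset_inter i1 inter_subset_right)
    rw [e3] at this
    omega

lemma aux_pair (B C : Finset α) (k d r : ℕ) (hB : B.card = k) (hC : C.card = k)
    (hBC : (B ∩ C).card = d) :
    ((powersetCard (d + 2 * r) (univ : Finset α)).filter
      (fun X => (X ∩ B).card = d + r ∧ (X ∩ C).card = d + r)).card
      = (k - d).choose r * (k - d).choose r := by
  have hb : (B \ C).card = k - d := by
    have := card_inter_add_card_sdiff B C; omega
  have hc : (C \ B).card = k - d := by
    have := card_inter_add_card_sdiff C B; rw [inter_comm] at this; omega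
  conv_rhs => rw [← hb]
  conv_rhs => arg 2; rw [hb, ← hc]
  rw [← card_powersetCard, ← card_powersetCard r (C \ B), ← card_product]
  have key : ∀ Y Z : Finset α, Y ⊆ B \ C → Z ⊆ C \ B → 
      ((B ∩ C ∪ Y) ∪ Z) ∩ B = B ∩ C ∪ Y ∧ ((B ∩ C ∪ Y) ∪ Z) ∩ C = B ∩ C ∪ Z ∧
      ((B ∩ C ∪ Y) ∪ Z) ∩ (B \ C) = Y ∧ ((B ∩ C ∪ Y) ∪ Z) ∩ (C \ B) = Z ∧
      Disjoint (B ∩ C) Y ∧ Disjoint (B ∩ C) Z ∧ Disjoint (B ∩ C ∪ Y) Z := by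
    intro Y Z hY hZ
    have hY' : ∀ a, a ∈ Y → a ∈ B ∧ a ∉ C := fun a ha => by simpa using hY ha
    have hZ' : ∀ a, a ∈ Z → a ∈ C ∧ a ∉ B := fun a ha => by simpa using hZ ha
    simp only [disjoint_left]
    refine ⟨?_, ?_, ?_, ?_, ?_, ?_, ?_⟩
    iterate 4
      ext a; have := hY' a; have := hZ' a; simp; tauto
    all_goals
      intro a; have := hY' a; have := hZ' a; simp; tauto
  refine card_bij' (fun X _ => (X ∩ (B \ C), X ∩ (C \ B))) (fun Y _ => (B ∩ C ∪ Y.1) ∪ Y.2)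
    ?_ ?_ ?_ ?_
  · intro X hX
    simp only [mem_filter, mem_powersetCard, subset_univ, true_and] at hX
    obtain ⟨h0, h1, h2⟩ := hX
    obtain ⟨-, -, s3, s4⟩ := aux_struct X B C d r h0 hBC h1 h2
    simp only [mem_product, mem_powersetCard]
    exact ⟨⟨inter_subset_right, s3⟩, inter_subset_right, s4⟩
  · rintro ⟨Y, Z⟩ h
    simp only [mem_product, mem_powersetCard] at h
    obtain ⟨⟨h1, h2⟩, h3, h4⟩ := h
    obtain ⟨k1, k2, k3, k4, k5, k6, k7⟩ := key Y Z h1 h3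
    simp only [mem_filter, mem_powersetCard, subset_univ, true_and, k1, k2]
    rw [card_union_of_disjoint k7, card_union_of_disjoint k6, card_union_of_disjoint k5]
    omega
  · intro X hX
    simp only [mem_filter, mem_powersetCard, subset_univ, true_and] at hX
    obtain ⟨h0, h1, h2⟩ := hX
    obtain ⟨s1, s2, -, -⟩ := aux_struct X B C d r h0 hBC h1 h2
    ext a
    have t1 := @s1 a
    have t2 := @s2 a
    simp only [mem_union, mem_inter, mem_sdiff] at t1 t2 ⊢
    tauto
  · rintro ⟨Y, Z⟩ h
    simp only [mem_product, mem_powersetCard] at h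
    obtain ⟨⟨h1, h2⟩, h3, h4⟩ := h
    obtain ⟨k1, k2, k3, k4, k5, k6, k7⟩ := key Y Z h1 h3
    simp only [k3, k4]

/-- The number of blocks meeting `X` in exactly `d + r` points. -/
def auxm (𝓑 : Finset (Finset α)) (d r : ℕ) (X : Finset α) : ℕ :=
  (𝓑.filter (fun B => (X ∩ B).card = d + r)).card

lemma aux_sum_m (𝓑 : Finset (Finset α)) (k d r : ℕ) (hk : ∀ B ∈ 𝓑, B.card = k) :
    ∑ X ∈ powersetCard (d + 2 * r) (univ : Finset α), auxm 𝓑 d r X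
      = 𝓑.card * (k.choose (d + r) * (Fintype.card α - k).choose r) := by
  simp only [auxm, card_filter]
  rw [sum_comm]
  rw [← smul_eq_mul (a := 𝓑.card), ← sum_const]
  refine sum_congr rfl fun B hB => ?_
  rw [← card_filter, aux_count B _ _ r (by omega), hk B hB]

/-- Number of ordered pairs of distinct blocks meeting in exactly `d` points. -/
def auxN (𝓑 : Finset (Finset α)) (d : ℕ) : ℕ :=
  ∑ B ∈ 𝓑, ∑ C ∈ 𝓑, if B ≠ C ∧ (B ∩ C).card = d then 1 else 0

lemma aux_sum_m2 (𝓑 : Finset (Finset α)) (k d r : ℕ) (hk : ∀ B ∈ 𝓑, B.card = k)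
    (hd : ∀ B ∈ 𝓑, ∀ C ∈ 𝓑, B ≠ C → (B ∩ C).card ≤ d) :
    ∑ X ∈ powersetCard (d + 2 * r) (univ : Finset α), auxm 𝓑 d r X * auxm 𝓑 d r X
      = 𝓑.card * (k.choose (d + r) * (Fintype.card α - k).choose r)
        + auxN 𝓑 d * ((k - d).choose r * (k - d).choose r) := by
  simp only [auxm, card_filter, sum_mul_sum]
  rw [sum_comm]
  rw [← smul_eq_mul (a := 𝓑.card), ← sum_const, auxN, sum_mul, ← sum_add_distrib]
  refine sum_congr rfl fun B hB => ?_
  rw [sum_comm, sum_mul]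
  have e : k.choose (d + r) * (Fintype.card α - k).choose r
      = ∑ C ∈ 𝓑, if B = C then k.choose (d + r) * (Fintype.card α - k).choose r else 0 := by
    simp [hB]
  rw [e, ← sum_add_distrib]
  refine sum_congr rfl fun C hC => ?_
  have e2 : ∀ X : Finset α, ((if (X ∩ B).card = d + r then 1 else 0) *
      (if (X ∩ C).card = d + r then 1 else 0) : ℕ)
      = if (X ∩ B).card = d + r ∧ (X ∩ C).card = d + r then 1 else 0 := by
    intro X
    split_ifs <;> simp_all
  simp only [e2]
  rw [← card_filter]
  by_cases hBC : B = C
  · subst hBC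
    simp only [and_self]
    rw [aux_count B _ _ r (by omega), hk B hB]
    simp
  · by_cases hcd : (B ∩ C).card = d
    · rw [aux_pair B C k d r (hk B hB) (hk C hC) hcd]
      simp [hBC, hcd]
    · simp only [hBC, hcd, if_false, and_false, zero_mul, add_zero]
      rw [card_eq_zero, filter_eq_empty_iff]
      rintro X hX ⟨h1, h2⟩
      have h3 := aux_inter X B C
      have h4 := hd B hB C hC hBC
      rw [mem_powersetCard] at hX
      omega

/-- For `|X| = d + 2i`, if some block meets `X` in `d + i` points then exactly
`(d + 2i)/i` blocks do. -/
lemma aux_m1 (𝓑 : Finset (Finset α)) (d i : ℕ)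
    (hd : ∀ B ∈ 𝓑, ∀ C ∈ 𝓑, B ≠ C → (B ∩ C).card ≤ d)
    (hβ : ∀ X : Finset α, X.card = d + 2 * i - 1 →
      ∃! B, B ∈ 𝓑 ∧ d + i ≤ (X ∩ B).card)
    (X : Finset α) (hX : X.card = d + 2 * i) :
    i * (auxm 𝓑 d i X * auxm 𝓑 d i X) = (d + 2 * i) * auxm 𝓑 d i X := by
  by_cases h0 : auxm 𝓑 d i X = 0
  · simp [h0]
  suffices h : i * auxm 𝓑 d i X = d + 2 * i by
    rw [← mul_assoc, h]
  obtain ⟨B, hB⟩ := card_pos.mp (Nat.pos_of_ne_zero h0)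
  rw [mem_filter] at hB
  obtain ⟨hB, hXB⟩ := hB
  have hex : ∀ C ∈ 𝓑, (X ∩ C).card ≤ d + i := by
    intro C hC
    by_cases hBC : B = C
    · subst hBC; omega
    · have := hd B hB C hC hBC
      have := aux_inter X B C
      omega
  have h1 : ∀ y ∈ X, (∑ C ∈ 𝓑.filter (fun C => (X ∩ C).card = d + i),
      if y ∉ C then 1 else 0) = 1 := by
    intro y hy
    obtain ⟨C, ⟨hC, hXC⟩, huniq⟩ := hβ (X.erase y) (by rw [card_erase_of_mem hy, hX])
    rw [← card_filter, filter_filter, card_eq_one]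
    refine ⟨C, ?_⟩
    ext D
    simp only [mem_filter, mem_singleton]
    constructor
    · rintro ⟨hD, h2, h3⟩
      refine huniq D ⟨hD, ?_⟩
      have : X.erase y ∩ D = X ∩ D := by
        ext a
        simp only [mem_inter, mem_erase]
        constructor
        · tauto
        · rintro ⟨ha, hb⟩
          refine ⟨⟨?_, ha⟩, hb⟩
          rintro rfl
          exact h3 hb
      rw [this]
      omega
    · rintro rfl
      have hs : X.erase y ∩ D ⊆ X ∩ D :=
        inter_subset_inter (erase_subset _ _) (Subset.refl _)
      have h4 := card_le_card hs
      have h5 := hex D hC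
      refine ⟨hC, by omega, ?_⟩
      intro hyD
      have h6 := eq_of_subset_of_card_le hs (by omega)
      have h7 : y ∈ X.erase y ∩ D := by
        rw [h6]; simp [hy, hyD]
      simp at h7
  have h2 := sum_congr rfl h1
  rw [sum_comm, sum_const, hX, smul_eq_mul, mul_one] at h2
  rw [← h2, auxm, mul_comm, ← smul_eq_mul, ← sum_const]
  refine sum_congr rfl fun C hC => ?_
  rw [mem_filter] at hC
  rw [← card_filter]
  have h3 := card_inter_add_card_sdiff X C
  have h4 : X.filter (fun y => y ∉ C) = X \ C := by ext a; simp
  rw [h4]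
  omega

/-- Exactly one block per bad set. -/
lemma aux_cover (𝓑 : Finset (Finset α)) (k d n r : ℕ) (hr : r ≤ n + 1)
    (hnr : n + d + 2 ≤ 2 * (n + 1 - r) + 1)
    (hk : ∀ B ∈ 𝓑, B.card = k)
    (hd : ∀ B ∈ 𝓑, ∀ C ∈ 𝓑, B ≠ C → (B ∩ C).card ≤ d) :
    ((powersetCard n (univ : Finset α)).filter
        (fun X => ∀ B ∈ 𝓑, r ≤ (X \ B).card)).card
      + 𝓑.card * auxP k (Fintype.card α - k) r n = (Fintype.card α).choose n := by
  have e : 𝓑.card * auxP k (Fintype.card α - k) r n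
      = ∑ X ∈ powersetCard n (univ : Finset α),
          (𝓑.filter (fun B => (X \ B).card < r)).card := by
    simp only [card_filter]
    rw [sum_comm, ← smul_eq_mul, ← sum_const]
    refine sum_congr rfl fun B hB => ?_
    rw [← card_filter, aux_countlt B n r hr, hk B hB]
  rw [e, card_filter, ← sum_add_distrib]
  have : (Fintype.card α).choose n = ∑ X ∈ powersetCard n (univ : Finset α), 1 := by
    simp
  rw [this]
  refine sum_congr rfl fun X hX => ?_
  rw [mem_powersetCard] at hX
  split_ifs with h
  · have : 𝓑.filter (fun B => (X \ B).card < r) = ∅ := by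
      rw [filter_eq_empty_iff]
      intro B hB
      have := h B hB
      omega
    rw [this]; simp
  · push Not at h
    obtain ⟨B, hB, hXB⟩ := h
    rw [zero_add, card_eq_one]
    refine ⟨B, ?_⟩
    ext C
    simp only [mem_filter, mem_singleton]
    constructor
    · rintro ⟨hC, h2⟩
      by_contra hne
      have h3 := hd B hB C hC (Ne.symm hne)
      have h4 := aux_inter X B C
      have h5 := card_inter_add_card_sdiff X B
      have h6 := card_inter_add_card_sdiff X C
      omega
    · rintro rfl
      exact ⟨hB, hXB⟩

lemma aux_W (v k x b n r : ℕ) (hv : k + x = v) (hr : r ≤ n + 1) :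
    ((v : ℝ) - n) * ((v.choose n : ℝ) - b * auxP k x r n)
      = ((n : ℝ) + 1) * ((v.choose (n + 1) : ℝ) - b * auxP k x r (n + 1))
        - r * (b * ((k.choose (n + 1 - r) : ℝ) * (x.choose r : ℝ))) := by
  have h1 := aux_choose_succ v n
  have h2 := auxP_rec k x n r hr
  have h3 : (v : ℝ) = k + x := by rw [← hv]; push_cast; ring
  rw [← h3] at h2
  linear_combination (-1 : ℝ) * h1 - (b : ℝ) * h2

lemma aux_alg (x d c i E E3 M1 M2 N Q1 Q2 W1 Wa S : ℝ) (hi : 0 < i) (hd : 0 ≤ d)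
    (h3 : (d + i + 1) * E3 = (c - i) * E) (h1 : (i + 1) * M1 = (x - i) * E3)
    (hN : i * (N * (Q1 * Q1)) = (d + i) * E) (hQ : (i + 1) * Q2 = (c - i) * Q1)
    (hM2 : M2 = N * (Q2 * Q2))
    (hW1 : (d + 2 * i) * W1 = i * E)
    (hWa : (x + c - 2 * i) * W1 = (d + 2 * i + 1) * Wa - i * E3)
    (hS : (x + c - 2 * i - 1) * (Wa - E3) = (d + 2 * i + 2) * S - (i + 1) * M1) :
    (S * (M1 + M2) - M1 ^ 2) * ((d + 2 * i + 2) * (d + 2 * i + 1) * (d + 2 * i) * (d + i + 1)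
      * (i + 1) ^ 2 * i)
      = E ^ 2 * (c - i) * (i * (x + d + c) - (d + 2 * i) * c) * hPoly x d c i := by
  have p1 : d + i + 1 ≠ 0 := by positivity
  have p2 : i + 1 ≠ 0 := by positivity
  have p3 : d + 2 * i ≠ 0 := by positivity
  have p4 : d + 2 * i + 1 ≠ 0 := by positivity
  have p5 : d + 2 * i + 2 ≠ 0 := by positivity
  have p6 : i ≠ 0 := by positivity
  have e3 : E3 = (c - i) * E / (d + i + 1) := by rw [eq_div_iff p1]; linarith
  have e1 : M1 = (x - i) * E3 / (i + 1) := by rw [eq_div_iff p2]; linarith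
  have e2 : M2 = (c - i) ^ 2 * (d + i) * E / ((i + 1) ^ 2 * i) := by
    rw [eq_div_iff (by positivity), hM2]
    linear_combination (c - i) ^ 2 * hN + N * i * ((i + 1) * Q2 + (c - i) * Q1) * hQ
  have eW1 : W1 = i * E / (d + 2 * i) := by rw [eq_div_iff p3]; linarith
  have eWa : Wa = ((x + c - 2 * i) * W1 + i * E3) / (d + 2 * i + 1) := by
    rw [eq_div_iff p4]; linarith
  have eS : S = ((x + c - 2 * i - 1) * (Wa - E3) + (i + 1) * M1) / (d + 2 * i + 2) := by
    rw [eq_div_iff p5]; linarith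
  rw [eS, eWa, e2, eW1, e1, e3]
  unfold hPoly
  field_simp
  ring

end helpers

/-- **Proposition 7.** Let `𝓑` be a `β(i)` design with parameter `(v, k, d)`, `c = k - d`,
`k - d ≥ i + 1`, and suppose `v` does not achieve the lower bound `(d + 2i)(k-d)/i`.
Then `h(v-k, d, c, i) ≥ 0`, with equality if and only if the number of blocks `B` with
`|X ∩ B| = d + i + 1` does not depend on the choice of `X ∈ S₂`. -/
theorem prop7 (𝓑 : Finset (Finset α)) (v k d i c : ℕ)
    (hB : IsBetaDesign 𝓑 v k d i) (hkd : i + 1 ≤ k - d) (hc : c = k - d)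
    (hlb : (d + 2 * i) * (k - d) < i * v) :
    0 ≤ hPoly ((v : ℝ) - (k : ℝ)) (d : ℝ) (c : ℝ) (i : ℝ) ∧
    (hPoly ((v : ℝ) - (k : ℝ)) (d : ℝ) (c : ℝ) (i : ℝ) = 0 ↔
      ∃ m : ℕ, ∀ X ∈ S2 𝓑 d i,
        (𝓑.filter (fun B => (X ∩ B).card = d + i + 1)).card = m) := by
  obtain ⟨⟨hv, hb2, hdk, hkv, hk, hd, -⟩, hi, hiv, hβ⟩ := hB
  have hkc : k = d + c := by omega
  obtain ⟨x, hx⟩ : ∃ x, k + x = v := ⟨v - k, by omega⟩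
  have hvx : Fintype.card α - k = x := by omega
  rw [← hc] at hkd hlb
  -- `x > i`
  have hxi : i < x := by
    by_contra hcon
    have h1 : i * v ≤ i * (d + c + i) := Nat.mul_le_mul_left i (by omega)
    nlinarith
  -- the two covering counts
  have cov0 := aux_cover 𝓑 k d (d + 2 * i - 1) i (by omega) (by omega) hk hd
  have cov2 := aux_cover 𝓑 k d (d + 2 * i + 2) (i + 1) (by omega) (by omega) hk hd
  have z0 : (powersetCard (d + 2 * i - 1) (univ : Finset α)).filter
      (fun X => ∀ B ∈ 𝓑, i ≤ (X \ B).card) = ∅ := by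
    rw [filter_eq_empty_iff]
    intro X hX hcon
    rw [mem_powersetCard] at hX
    obtain ⟨B, ⟨hB, hXB⟩, -⟩ := hβ X hX.2
    have h1 := hcon B hB
    have h2 := card_inter_add_card_sdiff X B
    omega
  have z2 : (powersetCard (d + 2 * i + 2) (univ : Finset α)).filter
      (fun X => ∀ B ∈ 𝓑, i + 1 ≤ (X \ B).card) = S2 𝓑 d i := by
    ext X
    simp only [S2, mem_filter, mem_powersetCard, subset_univ, mem_univ, true_and]
    have h0 : d + 2 * (i + 1) = d + 2 * i + 2 := by ring
    rw [h0]
    refine and_congr_right fun hX => forall₂_congr fun B hB => ?_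
    have h2 := card_inter_add_card_sdiff X B
    omega
  rw [z0, card_empty, zero_add, hvx, hv] at cov0
  rw [z2, hvx, hv] at cov2
  -- moments
  have A1 := aux_sum_m 𝓑 k d i hk
  have A2 := aux_sum_m2 𝓑 k d i hk hd
  have B1 := aux_sum_m 𝓑 k d (i + 1) hk
  have B2 := aux_sum_m2 𝓑 k d (i + 1) hk hd
  rw [hvx] at A1 A2 B1 B2
  rw [← hc] at A2 B2
  have A3 : i * ∑ X ∈ powersetCard (d + 2 * i) (univ : Finset α),
      auxm 𝓑 d i X * auxm 𝓑 d i X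
      = (d + 2 * i) * ∑ X ∈ powersetCard (d + 2 * i) (univ : Finset α), auxm 𝓑 d i X := by
    rw [mul_sum, mul_sum]
    refine sum_congr rfl fun X hX => ?_
    rw [mem_powersetCard] at hX
    exact aux_m1 𝓑 d i hd hβ X hX.2
  rw [A1, A2] at A3
  have hsub : S2 𝓑 d i ⊆ powersetCard (d + 2 * (i + 1)) (univ : Finset α) := by
    intro X hX
    simp only [S2, mem_filter, mem_univ, true_and] at hX
    simp [mem_powersetCard, hX.1]
  have hzero : ∀ X ∈ powersetCard (d + 2 * (i + 1)) (univ : Finset α), X ∉ S2 𝓑 d i →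
      auxm 𝓑 d (i + 1) X = 0 := by
    intro X hX hXS
    rw [mem_powersetCard] at hX
    simp only [S2, mem_filter, mem_univ, true_and, hX.2] at hXS
    push Not at hXS
    obtain ⟨B, hB, hXB⟩ := hXS
    rw [auxm, card_eq_zero, filter_eq_empty_iff]
    intro C hC hXC
    by_cases hBC : B = C
    · subst hBC; omega
    · have := hd B hB C hC hBC
      have := aux_inter X B C
      omega
  rw [← sum_subset hsub hzero] at B1
  rw [← sum_subset hsub (fun X hX hXS => by rw [hzero X hX hXS, mul_zero])] at B2
  -- real numbers
  have hi0 : (0 : ℝ) < i := by exact_mod_cast hi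
  have hd0 : (0 : ℝ) ≤ d := by positivity
  have w0 := aux_W v k x 𝓑.card (d + 2 * i - 1) i hx (by omega)
  have w1 := aux_W v k x 𝓑.card (d + 2 * i) i hx (by omega)
  have w2 := aux_W v k x 𝓑.card (d + 2 * i + 1) (i + 1) hx (by omega)
  have r0 : d + 2 * i - 1 + 1 = d + 2 * i := by omega
  have r1 : d + 2 * i - i = d + i := by omega
  have r2 : d + 2 * i + 1 - i = d + i + 1 := by omega
  have r3 : d + 2 * i + 1 + 1 - (i + 1) = d + i + 1 := by omega
  have r4 : ((d + 2 * i - 1 : ℕ) : ℝ) + 1 = d + 2 * i := by exact_mod_cast r0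
  rw [r0, r1, r4] at w0
  rw [r2] at w1
  rw [r3] at w2
  have c0 : (𝓑.card : ℝ) * auxP k x i (d + 2 * i - 1) = (v.choose (d + 2 * i - 1) : ℝ) := by
    exact_mod_cast cov0
  rw [c0, sub_self, mul_zero] at w0
  have c2 : (v.choose (d + 2 * i + 1 + 1) : ℝ) - 𝓑.card * auxP k x (i + 1) (d + 2 * i + 1 + 1)
      = (S2 𝓑 d i).card := by
    have : (v.choose (d + 2 * i + 2) : ℝ)
        = (S2 𝓑 d i).card + 𝓑.card * auxP k x (i + 1) (d + 2 * i + 2) := by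
      exact_mod_cast cov2.symm
    linarith
  rw [c2] at w2
  have p1 : auxP k x (i + 1) (d + 2 * i + 1)
      = auxP k x i (d + 2 * i + 1) + k.choose (d + i + 1) * x.choose i := by
    simp only [auxP, sum_range_succ, r2]
  rw [p1] at w2
  have hvR : (v : ℝ) = d + c + x := by
    rw [← hx, hkc]; push_cast; ring
  have hkR : (k : ℝ) = d + c := by rw [hkc]; push_cast; ring
  set E : ℝ := 𝓑.card * ((k.choose (d + i) : ℝ) * (x.choose i : ℝ)) with hE
  set E3 : ℝ := 𝓑.card * ((k.choose (d + i + 1) : ℝ) * (x.choose i : ℝ)) with hE3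
  set M1 : ℝ := 𝓑.card * ((k.choose (d + i + 1) : ℝ) * (x.choose (i + 1) : ℝ)) with hM1
  have f3 : ((d : ℝ) + i + 1) * E3 = (c - i) * E := by
    have := aux_choose_succ k (d + i)
    push_cast at this
    rw [hkR] at this
    rw [hE3, hE]
    linear_combination (𝓑.card : ℝ) * (x.choose i : ℝ) * this
  have f1 : ((i : ℝ) + 1) * M1 = (x - i) * E3 := by
    have := aux_choose_succ x i
    rw [hE3, hM1]
    linear_combination (𝓑.card : ℝ) * (k.choose (d + i + 1) : ℝ) * this
  have fQ := aux_choose_succ c i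
  have fN : (i : ℝ) * ((auxN 𝓑 d : ℝ) * ((c.choose i : ℝ) * (c.choose i : ℝ)))
      = (d + i) * E := by
    have h : (((i * (𝓑.card * (k.choose (d + i) * x.choose i)
        + auxN 𝓑 d * (c.choose i * c.choose i)) : ℕ)) : ℝ)
        = (((d + 2 * i) * (𝓑.card * (k.choose (d + i) * x.choose i)) : ℕ) : ℝ) := by
      rw [A3]
    push_cast at h
    rw [hE]
    linear_combination h
  have alg := aux_alg x d c i E E3 M1
    ((auxN 𝓑 d : ℝ) * ((c.choose (i + 1) : ℝ) * (c.choose (i + 1) : ℝ))) (auxN 𝓑 d)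
    (c.choose i) (c.choose (i + 1))
    ((v.choose (d + 2 * i) : ℝ) - 𝓑.card * auxP k x i (d + 2 * i))
    ((v.choose (d + 2 * i + 1) : ℝ) - 𝓑.card * auxP k x i (d + 2 * i + 1))
    ((S2 𝓑 d i).card) hi0 hd0 f3 f1 fN fQ rfl (by linarith)
    (by
      push_cast at w1
      rw [hvR] at w1
      linear_combination w1)
    (by
      push_cast at w2
      rw [hvR] at w2
      rw [hE3]
      linear_combination w2)
  have hxk : (v : ℝ) - k = x := by rw [hvR, hkR]; ring
  rw [hxk]
  have bpos : (0 : ℝ) < 𝓑.card := by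
    have : 0 < 𝓑.card := by omega
    exact_mod_cast this
  have Epos : 0 < E := by
    have h1 : 0 < k.choose (d + i) := Nat.choose_pos (by omega)
    have h2 : 0 < x.choose i := Nat.choose_pos (by omega)
    have h1' : (0 : ℝ) < k.choose (d + i) := by exact_mod_cast h1
    have h2' : (0 : ℝ) < x.choose i := by exact_mod_cast h2
    exact mul_pos bpos (mul_pos h1' h2')
  have M1pos : 0 < M1 := by
    have h1 : 0 < k.choose (d + i + 1) := Nat.choose_pos (by omega)
    have h2 : 0 < x.choose (i + 1) := Nat.choose_pos (by omega)
    have h1' : (0 : ℝ) < k.choose (d + i + 1) := by exact_mod_cast h1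
    have h2' : (0 : ℝ) < x.choose (i + 1) := by exact_mod_cast h2
    exact mul_pos bpos (mul_pos h1' h2')
  have cpos : (0 : ℝ) < (c : ℝ) - i := by
    have : (i : ℝ) + 1 ≤ c := by exact_mod_cast hkd
    linarith
  have Lpos : (0 : ℝ) < i * ((x : ℝ) + d + c) - (d + 2 * i) * c := by
    have h : (((d + 2 * i) * c : ℕ) : ℝ) < ((i * v : ℕ) : ℝ) := by exact_mod_cast hlb
    push_cast at h
    rw [hvR] at h
    linarith
  -- moments over `S2` in the reals
  have R1 : ∑ X ∈ S2 𝓑 d i, (auxm 𝓑 d (i + 1) X : ℝ) = M1 := by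
    rw [hM1]
    exact_mod_cast B1
  have R2 : ∑ X ∈ S2 𝓑 d i, (auxm 𝓑 d (i + 1) X : ℝ) * auxm 𝓑 d (i + 1) X
      = M1 + (auxN 𝓑 d : ℝ) * ((c.choose (i + 1) : ℝ) * (c.choose (i + 1) : ℝ)) := by
    rw [hM1]
    exact_mod_cast B2
  set M2 : ℝ := (auxN 𝓑 d : ℝ) * ((c.choose (i + 1) : ℝ) * (c.choose (i + 1) : ℝ)) with hM2
  set S : ℝ := ((S2 𝓑 d i).card : ℝ) with hS
  have Spos : 0 < S := by
    have : (S2 𝓑 d i).Nonempty := by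
      by_contra hne
      rw [not_nonempty_iff_eq_empty] at hne
      rw [hne, sum_empty] at R1
      linarith
    have := card_pos.mpr this
    rw [hS]
    exact_mod_cast this
  have var : ∑ X ∈ S2 𝓑 d i, (S * auxm 𝓑 d (i + 1) X - M1) ^ 2
      = S * (S * (M1 + M2) - M1 ^ 2) := by
    have : ∀ X ∈ S2 𝓑 d i, (S * (auxm 𝓑 d (i + 1) X : ℝ) - M1) ^ 2
        = S ^ 2 * ((auxm 𝓑 d (i + 1) X : ℝ) * auxm 𝓑 d (i + 1) X)
          - 2 * S * M1 * auxm 𝓑 d (i + 1) X + M1 ^ 2 := by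
      intro X _; ring
    rw [sum_congr rfl this, sum_add_distrib, sum_sub_distrib, ← mul_sum, ← mul_sum, R1, R2,
      sum_const, nsmul_eq_mul, ← hS]
    ring
  clear_value S M2 M1 E3 E
  obtain ⟨K, Kpos, hK⟩ : ∃ K : ℝ, 0 < K ∧
      ∑ X ∈ S2 𝓑 d i, (S * auxm 𝓑 d (i + 1) X - M1) ^ 2 = K * hPoly x d c i := by
    refine ⟨S * (E ^ 2 * (c - i) * (i * (x + d + c) - (d + 2 * i) * c)) /
      ((d + 2 * i + 2) * (d + 2 * i + 1) * (d + 2 * i) * (d + i + 1) * (i + 1) ^ 2 * i),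
      by positivity, ?_⟩
    rw [var, div_mul_eq_mul_div, eq_div_iff (by positivity)]
    linear_combination S * alg
  have nonneg : 0 ≤ ∑ X ∈ S2 𝓑 d i, (S * (auxm 𝓑 d (i + 1) X : ℝ) - M1) ^ 2 :=
    sum_nonneg fun X _ => sq_nonneg _
  refine ⟨?_, ?_, ?_⟩
  · rw [hK] at nonneg
    exact nonneg_of_mul_nonneg_right nonneg Kpos
  · intro h0
    rw [h0, mul_zero, sum_eq_zero_iff_of_nonneg (fun X _ => sq_nonneg _)] at hK
    have hSne : (S2 𝓑 d i).Nonempty := by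
      rw [← card_pos]
      rw [hS] at Spos
      exact_mod_cast Spos
    obtain ⟨Y, hY⟩ := hSne
    refine ⟨auxm 𝓑 d (i + 1) Y, fun X hX => ?_⟩
    have h1 := pow_eq_zero_iff (two_ne_zero) |>.mp (hK X hX)
    have h2 := pow_eq_zero_iff (two_ne_zero) |>.mp (hK Y hY)
    have h3 : (auxm 𝓑 d (i + 1) X : ℝ) = auxm 𝓑 d (i + 1) Y :=
      mul_left_cancel₀ Spos.ne' (by linarith)
    exact_mod_cast h3
  · rintro ⟨m, hm⟩
    have hm' : ∀ X ∈ S2 𝓑 d i, (auxm 𝓑 d (i + 1) X : ℝ) = m := by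
      intro X hX
      have := hm X hX
      exact_mod_cast this
    have h1 : M1 = S * m := by
      rw [← R1, sum_congr rfl hm', sum_const, nsmul_eq_mul, hS]
    have h2 : ∑ X ∈ S2 𝓑 d i, (S * (auxm 𝓑 d (i + 1) X : ℝ) - M1) ^ 2 = 0 := by
      refine sum_eq_zero fun X hX => ?_
      rw [hm' X hX, h1]
      ring
    rw [h2] at hK
    rcases mul_eq_zero.mp hK.symm with h | h
    · exact absurd h Kpos.ne'
    · exact h
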